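/- arXiv:1401.2273 — 2 statements merged into one kernel-verified Lean document; each statement's English description precedes it below -/
import Mathlib

section
/- Let G be a group with a nontrivial finite quotient, and let L_n be the free product of n copies of G. Then the profinite completion of L_n cannot be topologically generated by fewer than (59/60)·n elements. -/
/-!
The lower bound comes from counting homomorphisms. If a finite family of distinct homomorphisms
`φ v : L →* W` is such that each value `φ v l` lies in a set of at most `m` elements depending only
on `l`, then the joint image `Q` of `L` in `V → W` is a finite quotient through which every `φ v`
factors, and a homomorphism on `Q` is determined by its values on a generating set `S`; hence
`|V| ≤ m ^ |S|` (`exists_quotient_card_le_pow`).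

Let `P` be a nontrivial finite quotient of `G`.

* If `|P| ≥ 60`, take for `W` the regular wreath product of `Z/2` by `P`. The `n` copies of `G` map
  to the complement `P` of the base group, each followed by conjugation by an element of the base
  group. Base elements modulo constants give `2 ^ ((|P| - 1) n)` different homomorphisms,
  all with the same projection to `P`, so that `m = 2 ^ |P|` and `(|P| - 1) n ≤ |P| |S|`.
* If `|P| < 60`, then `P` is solvable (`isSolvable_of_card_lt_sixty`), hence has a quotient `B` of
  prime order `p`. Composing the `n` copies of `G → B` with power maps gives `p ^ n` homomorphisms
  to `B`, so that `m = p` and `n ≤ |S|`.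

Solvability in order less than `60` is reduced by induction to simple groups. There Sylow's theorems
leave, for a suitable prime `p`, only two possibilities: at most four Sylow `p`-subgroups, so that
the action on them is a homomorphism to the solvable group `S₄`, or a self-normalizing Sylow subgroup
of order `p`, which has a normal complement by Burnside's transfer theorem.
-/

/-! ### Groups of order less than 60 -/

theorem isSolvable_perm_fin_four : Group.IsSolvable (Equiv.Perm (Fin 4)) := by
  have h4 : Nat.card (Fin 4) = 4 := by simp
  have hV := alternatingGroup.kleinFour_isKleinFour h4
  have hc : Group.IsSolvable (commutator (alternatingGroup (Fin 4))) := by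
    rw [← alternatingGroup.kleinFour_eq_commutator h4]
    refine Group.isSolvable_of_comm fun a b => ?_
    exact mul_comm_of_exponent_two hV.exponent_two a b
  have hA : Group.IsSolvable (alternatingGroup (Fin 4)) := by
    refine Group.isSolvable_of_ker_le_range (commutator (alternatingGroup (Fin 4))).subtype
      (Abelianization.of (G := alternatingGroup (Fin 4))) ?_
    rw [Abelianization.ker_of, Subgroup.range_subtype]
  refine Group.isSolvable_of_ker_le_range (alternatingGroup (Fin 4)).subtype
    (Equiv.Perm.sign (α := Fin 4)) ?_
  rw [Subgroup.range_subtype]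
  exact le_rfl

theorem isSolvable_perm_of_card_le_four (X : Type*) [Finite X] (h : Nat.card X ≤ 4) :
    Group.IsSolvable (Equiv.Perm X) := by
  have := isSolvable_perm_fin_four
  have e : X ↪ Fin 4 := (Finite.equivFin X).toEmbedding.trans (Fin.castLEEmb h)
  exact Group.isSolvable_of_isSolvable_injective (Equiv.Perm.viaEmbeddingHom_injective e)

/-- The case of few Sylow subgroups: a simple group with at most four Sylow `p`-subgroups is
solvable, because it either embeds in a symmetric group on four letters or has a normal
Sylow `p`-subgroup. -/
theorem isSolvable_of_card_sylow_le_four {P : Type*} [Group P] [Finite P] [IsSimpleGroup P]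
    (p : ℕ) [Fact p.Prime] (hp : p ∣ Nat.card P) (h : Nat.card (Sylow p P) ≤ 4) :
    Group.IsSolvable P := by
  have hX := isSolvable_perm_of_card_le_four _ h
  rcases (MulAction.toPermHom P (Sylow p P)).normal_ker.eq_bot_or_eq_top with hk | hk
  · exact Group.isSolvable_of_isSolvable_injective ((MonoidHom.ker_eq_bot_iff _).1 hk)
  · have hs : Subsingleton (Sylow p P) := by
      refine ⟨fun A B => ?_⟩
      obtain ⟨g, rfl⟩ := MulAction.exists_smul_eq P A B
      have hg : g ∈ (MulAction.toPermHom P (Sylow p P)).ker := hk ▸ Subgroup.mem_top g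
      exact (DFunLike.congr_fun (MonoidHom.mem_ker.1 hg) A).symm
    obtain ⟨S⟩ : Nonempty (Sylow p P) := inferInstance
    have hS := S.normal_of_subsingleton
    rcases hS.eq_bot_or_eq_top with hb | ht
    · exact absurd hb (S.ne_bot_of_dvd_card hp)
    · have hP : IsPGroup p P := by
        have := S.isPGroup'
        rw [ht] at this
        exact this.of_equiv Subgroup.topEquiv
      have := hP.isNilpotent
      infer_instance

/-- The case of a self-normalizing Sylow subgroup of order `p`: it is abelian, hence central in its
normalizer, and Burnside's transfer theorem gives it a normal complement. -/
theorem isSolvable_of_card_sylow_mul_eq {P : Type*} [Group P] [Finite P] [IsSimpleGroup P]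
    (p : ℕ) [hp : Fact p.Prime] (h : Nat.card (Sylow p P) * p = Nat.card P) :
    Group.IsSolvable P := by
  obtain ⟨S⟩ : Nonempty (Sylow p P) := inferInstance
  have hdvd : p ∣ Nat.card P := Dvd.intro_left _ h
  have hN : Nat.card (Subgroup.normalizer (S : Set P)) = p := by
    have h1 := Subgroup.card_mul_index (Subgroup.normalizer (S : Set P))
    rw [← S.card_eq_index_normalizer, ← h, mul_comm] at h1
    exact Nat.eq_of_mul_eq_mul_left Nat.card_pos h1
  have hpS : p ∣ Nat.card S := S.dvd_card_of_dvd_card hdvd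
  have hle : (S : Subgroup P) ≤ Subgroup.normalizer (S : Set P) := Subgroup.le_normalizer
  have hS : Nat.card S = p :=
    Nat.dvd_antisymm ((Subgroup.card_dvd_of_le hle).trans hN.dvd) hpS
  have heq : (S : Subgroup P) = Subgroup.normalizer (S : Set P) :=
    Subgroup.eq_of_le_of_card_ge hle (by rw [hN]; exact hS.ge)
  have hcyc : IsCyclic S := isCyclic_of_prime_card hS
  have hC : Subgroup.normalizer (S : Set P) ≤ Subgroup.centralizer (S : Set P) := by
    refine heq.ge.trans fun x hx => Subgroup.mem_centralizer_iff.2 fun y hy => ?_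
    have := mul_comm' (⟨y, hy⟩ : S) ⟨x, hx⟩
    exact congrArg Subtype.val this
  have hcompl := MonoidHom.ker_transferSylow_isComplement' S hC
  rcases (MonoidHom.transferSylow S hC).normal_ker.eq_bot_or_eq_top with hb | ht
  · rw [hb, Subgroup.isComplement'_bot_left] at hcompl
    refine Group.isSolvable_of_comm fun a b => ?_
    have ha : a ∈ (S : Subgroup P) := hcompl ▸ Subgroup.mem_top a
    have hb : b ∈ (S : Subgroup P) := hcompl ▸ Subgroup.mem_top b
    exact congrArg Subtype.val (mul_comm' (⟨a, ha⟩ : S) ⟨b, hb⟩)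
  · have := MonoidHom.not_dvd_card_ker_transferSylow S hC
    rw [ht, Subgroup.card_top] at this
    exact absurd hdvd this

set_option synthInstance.maxSize 5000 in
set_option synthInstance.maxHeartbeats 200000 in
/-- The arithmetic of Sylow's theorems: here `d` stands for the number of Sylow `p`-subgroups of a
group of order `m`, for a good choice of `p`. The second alternative is needed for `m = 30` and
`m = 56`. -/
theorem exists_prime_sylow_count (m : ℕ) (h1 : 1 < m) (h60 : m < 60) :
    ∃ p, p.Prime ∧ p ∣ m ∧ ∀ d, d ∣ m → d ≡ 1 [MOD p] → d ≤ 4 ∨ d * p = m := by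
  have key : ∀ m < 60, 1 < m → ∃ p < 60, (2 ≤ p ∧ ∀ q < p, 2 ≤ q → p % q ≠ 0) ∧ m % p = 0 ∧
      ∀ d < m + 1, m % d = 0 → d % p = 1 % p → d ≤ 4 ∨ d * p = m := by
    decide +kernel
  obtain ⟨p, -, ⟨hp2, hq⟩, hpm, hd⟩ := key m h60 h1
  refine ⟨p, ?_, Nat.dvd_of_mod_eq_zero hpm, fun d hdm hmod => ?_⟩
  · refine Nat.prime_def_lt.2 ⟨hp2, fun q hlt hdvd => ?_⟩
    by_contra hne
    have : 0 < q := Nat.pos_of_dvd_of_pos hdvd (by omega)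
    exact hq q hlt (by omega) (Nat.mod_eq_zero_of_dvd hdvd)
  · exact hd d (Nat.lt_succ_of_le (Nat.le_of_dvd (by omega) hdm)) (Nat.mod_eq_zero_of_dvd hdm) hmod

theorem isSolvable_of_isSimpleGroup_of_card_lt_sixty {P : Type*} [Group P] [Finite P]
    [IsSimpleGroup P] (h : Nat.card P < 60) : Group.IsSolvable P := by
  obtain ⟨p, hp, hpm, hd⟩ := exists_prime_sylow_count _ Finite.one_lt_card h
  have := Fact.mk hp
  obtain ⟨S⟩ : Nonempty (Sylow p P) := inferInstance
  have hdvd : Nat.card (Sylow p P) ∣ Nat.card P :=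
    S.card_dvd_index.trans (Subgroup.index_dvd_card _)
  rcases hd _ hdvd (card_sylow_modEq_one p P) with h4 | hm
  · exact isSolvable_of_card_sylow_le_four p hpm h4
  · exact isSolvable_of_card_sylow_mul_eq p hm

theorem isSolvable_of_card_lt_sixty (k : ℕ) (hk : k < 60) :
    ∀ (P : Type) [Group P] [Finite P], Nat.card P = k → Group.IsSolvable P := by
  induction k using Nat.strong_induction_on with
  | _ k ih =>
    intro P _ _ hP
    by_cases hN : ∃ N : Subgroup P, N.Normal ∧ N ≠ ⊥ ∧ N ≠ ⊤
    · obtain ⟨N, _, hb, ht⟩ := hN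
      have hmul := Subgroup.card_mul_index N
      have h1 : 1 < Nat.card N := (Subgroup.one_lt_card_iff_ne_bot N).2 hb
      have h2 : 1 < N.index := Subgroup.one_lt_index_of_ne_top ht
      have s1 : Group.IsSolvable N := ih (Nat.card N) (by nlinarith) (by nlinarith) N rfl
      have s2 : Group.IsSolvable (P ⧸ N) := ih N.index (by nlinarith) (by nlinarith) (P ⧸ N) rfl
      refine Group.isSolvable_of_ker_le_range N.subtype (QuotientGroup.mk' N) ?_
      rw [QuotientGroup.ker_mk', Subgroup.range_subtype]
    · push Not at hN
      rcases subsingleton_or_nontrivial P with hs | hs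
      · exact Group.isSolvable_of_comm fun a b => Subsingleton.elim _ _
      · have : IsSimpleGroup P := ⟨fun N hn => or_iff_not_imp_left.2 (hN N hn)⟩
        exact isSolvable_of_isSimpleGroup_of_card_lt_sixty (hP ▸ hk)

/-- A nontrivial finite solvable group has a quotient of prime order: divide its abelianization by a
maximal subgroup. -/
theorem exists_prime_quotient (P : Type) [Group P] [Finite P] [Nontrivial P]
    [Group.IsSolvable P] :
    ∃ (B : Type) (_ : CommGroup B) (f : P →* B), Function.Surjective f ∧ (Nat.card B).Prime := by
  have hlt : commutator P < ⊤ := Group.IsSolvable.commutator_lt_top_of_nontrivial P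
  obtain ⟨M, hM, hle⟩ := (eq_top_or_exists_le_coatom (commutator P)).resolve_left hlt.ne
  have hn : M.Normal := Subgroup.Normal.of_commutator_le P hle
  have hcomm := Subgroup.Normal.quotient_commutative_iff_commutator_le.2 hle
  let _ : CommGroup (P ⧸ M) := { (inferInstance : Group (P ⧸ M)) with mul_comm := mul_comm' }
  refine ⟨P ⧸ M, inferInstance, QuotientGroup.mk' M, QuotientGroup.mk'_surjective M, ?_⟩
  have hnt : Nontrivial (P ⧸ M) := QuotientGroup.nontrivial_iff.2 hM.1
  have : IsSimpleGroup (P ⧸ M) := by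
    refine ⟨fun H _ => ?_⟩
    rcases hM.le_iff.1 (QuotientGroup.le_comap_mk' M H) with h | h
    · right
      exact Subgroup.comap_injective (QuotientGroup.mk'_surjective M) (by simpa using h)
    · left
      apply Subgroup.comap_injective (QuotientGroup.mk'_surjective M)
      rw [h, MonoidHom.comap_bot, QuotientGroup.ker_mk']
  exact IsSimpleGroup.prime_card

/-! ### Counting homomorphisms -/

/-- The counting principle: the map `c` records enough to separate the different values `φ v l` for
each fixed `l`, so at most `|M|` of them occur. -/
theorem exists_quotient_card_le_pow {L V W M : Type} [Group L] [Group W] [Finite V] [Finite W]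
    [Finite M] (φ : V → L →* W) (hφ : Function.Injective φ) (c : W → M)
    (hc : ∀ l v v', c (φ v l) = c (φ v' l) → φ v l = φ v' l) :
    ∃ (Q : Type) (_ : Group Q) (_ : Finite Q) (f : L →* Q), Function.Surjective f ∧
      ∀ S : Finset Q, Subgroup.closure (S : Set Q) = ⊤ → Nat.card V ≤ Nat.card M ^ S.card := by
  let F : L →* (V → W) := MonoidHom.pi φ
  refine ⟨F.range, inferInstance, inferInstance, F.rangeRestrict, F.rangeRestrict_surjective,
    fun S hS => ?_⟩
  let ev (v : V) : F.range →* W := (Pi.evalMonoidHom (fun _ : V => W) v).comp F.range.subtype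
  have hinj : Function.Injective fun (v : V) (s : S) => c (ev v s) := by
    intro v v' h
    have heq : ev v = ev v' := by
      refine MonoidHom.eq_of_eqOn_dense hS fun s hs => ?_
      have hs' := congrFun h ⟨s, hs⟩
      obtain ⟨l, rfl⟩ := F.rangeRestrict_surjective s
      exact hc l v v' hs'
    exact hφ (MonoidHom.ext fun l => DFunLike.congr_fun heq (F.rangeRestrict l))
  calc Nat.card V ≤ Nat.card (S → M) := Nat.card_le_card_of_injective _ hinj
    _ = Nat.card M ^ S.card := by simp [Nat.card_fun]

theorem rank_of_prime_quotient {G B : Type} [Group G] [CommGroup B] (hB : (Nat.card B).Prime)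
    (f : G →* B) (hf : Function.Surjective f) (n : ℕ) :
    ∃ (Q : Type) (_ : Group Q) (_ : Finite Q)
      (f : Monoid.CoprodI (fun _ : Fin n => G) →* Q), Function.Surjective f ∧
      ∀ S : Finset Q, Subgroup.closure (S : Set Q) = ⊤ → n ≤ S.card := by
  have hfin : Finite B := Nat.finite_of_card_ne_zero hB.ne_zero
  have hp : Fact (Nat.card B).Prime := ⟨hB⟩
  have hcyc : IsCyclic B := isCyclic_of_prime_card rfl
  obtain ⟨b, hb⟩ := hcyc.exists_generator
  obtain ⟨g, hg⟩ := hf b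
  let φ (v : Fin n → Fin (Nat.card B)) : Monoid.CoprodI (fun _ : Fin n => G) →* B :=
    Monoid.CoprodI.lift fun i => (powMonoidHom (v i : ℕ)).comp f
  have hφ : Function.Injective φ := by
    intro v v' h
    funext i
    have h' := DFunLike.congr_fun h (Monoid.CoprodI.of (i := i) g)
    simp only [φ, Monoid.CoprodI.lift_of, MonoidHom.comp_apply, hg, powMonoidHom_apply] at h'
    have ho : orderOf b = Nat.card B := orderOf_eq_card_of_forall_mem_zpowers hb
    exact Fin.ext (pow_injOn_Iio_orderOf (by simp [ho]) (by simp [ho]) h')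
  obtain ⟨Q, i1, i2, q, hq, hS⟩ := exists_quotient_card_le_pow φ hφ id fun _ _ _ h => h
  refine ⟨Q, i1, i2, q, hq, fun S hgen => ?_⟩
  have := hS S hgen
  simp only [Nat.card_fun, Nat.card_eq_fintype_card (α := Fin _), Fintype.card_fin] at this
  exact (Nat.pow_le_pow_iff_right hB.one_lt).1 this

/-- The wreath product bound `n (1 - 1 / |P|) ≤ |S|`, valid for every finite quotient `P`. -/
theorem rank_of_finite_quotient {G P : Type} [Group G] [Group P] [Finite P]
    (f : G →* P) (hf : Function.Surjective f) (n : ℕ) :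
    ∃ (Q : Type) (_ : Group Q) (_ : Finite Q)
      (f : Monoid.CoprodI (fun _ : Fin n => G) →* Q), Function.Surjective f ∧
      ∀ S : Finset Q, Subgroup.closure (S : Set Q) = ⊤ →
        (Nat.card P - 1) * n ≤ Nat.card P * S.card := by
  classical
  let C := Multiplicative (ZMod 2)
  -- Functions vanishing at `1` represent the base group modulo constants.
  let V := Fin n → {x : P // x ≠ 1} → C
  let ext (u : {x : P // x ≠ 1} → C) : P → C := fun x => if h : x ≠ 1 then u ⟨x, h⟩ else 1
  let W := RegularWreathProduct C P
  let φ (v : V) : Monoid.CoprodI (fun _ : Fin n => G) →* W :=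
    Monoid.CoprodI.lift fun i =>
      (MulAut.conj (⟨ext (v i), 1⟩ : W)).toMonoidHom.comp (RegularWreathProduct.inl.comp f)
  have hval (v : V) (i : Fin n) (g : G) (x : P) :
      (φ v (Monoid.CoprodI.of (i := i) g)).left x =
        ext (v i) x * (ext (v i) ((f g)⁻¹ * x))⁻¹ := by
    simp [φ, W]
  have hφ : Function.Injective φ := by
    intro v v' h
    funext i x
    obtain ⟨g, hg⟩ := hf x
    have h' := congrArg (fun w : W => w.left x)
      (DFunLike.congr_fun h (Monoid.CoprodI.of (i := i) g))
    simp only [hval, hg, inv_mul_cancel] at h'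
    simpa [ext, x.2] using h'
  have hright (v v' : V) (l) : (φ v l).right = (φ v' l).right := by
    have : RegularWreathProduct.rightHom.comp (φ v) =
        RegularWreathProduct.rightHom.comp (φ v') := by
      refine Monoid.CoprodI.ext_hom _ _ fun i => MonoidHom.ext fun g => ?_
      simp [φ, W]
    exact DFunLike.congr_fun this l
  obtain ⟨Q, i1, i2, q, hq, hS⟩ := exists_quotient_card_le_pow φ hφ
    (fun w : W => w.left) fun l v v' h => RegularWreathProduct.ext h (hright v v' l)
  refine ⟨Q, i1, i2, q, hq, fun S hgen => ?_⟩
  have hle := hS S hgen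
  have hC : Nat.card C = 2 := by simp [C]
  have hX : Nat.card {x : P // x ≠ 1} = Nat.card P - 1 := by
    have := Fintype.ofFinite P
    simp [Nat.card_eq_fintype_card, Fintype.card_subtype_compl]
  simp only [V, Nat.card_fun, hC, hX, Nat.card_eq_fintype_card (α := Fin _), Fintype.card_fin,
    ← pow_mul] at hle
  exact (Nat.pow_le_pow_iff_right one_lt_two).1 hle


/-- Let `G` be a group with a nontrivial finite quotient and `L_n` the free product
of `n` copies of `G`.  Then the profinite completion of `L_n` cannot be topologically
generated by fewer than `(59/60)·n` elements.  Since the minimal number of topological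
generators of the profinite completion of a group `L` equals the supremum of the
minimal numbers of generators of the finite quotients of `L`, we express this as:
there is a finite quotient of `L_n` every generating set of which has at least
`(59/60)·n` elements. -/
theorem profinite_rank_coprodI_ge (G : Type) [Group G]
    (hG : ∃ (Q : Type) (_ : Group Q) (_ : Finite Q) (_ : Nontrivial Q) (f : G →* Q),
      Function.Surjective f) (n : ℕ) :
    ∃ (Q : Type) (_ : Group Q) (_ : Finite Q)
      (f : Monoid.CoprodI (fun _ : Fin n => G) →* Q), Function.Surjective f ∧
      ∀ S : Finset Q, Subgroup.closure (S : Set Q) = ⊤ → 59 * n ≤ 60 * S.card := by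
  obtain ⟨P, _, _, _, f, hf⟩ := hG
  rcases lt_or_ge (Nat.card P) 60 with h | h
  · have := isSolvable_of_card_lt_sixty _ h P rfl
    obtain ⟨B, _, q, hq, hB⟩ := exists_prime_quotient P
    obtain ⟨Q, i1, i2, r, hr, hS⟩ := rank_of_prime_quotient hB (q.comp f) (hq.comp hf) n
    exact ⟨Q, i1, i2, r, hr, fun S hgen => by have := hS S hgen; omega⟩
  · obtain ⟨Q, i1, i2, r, hr, hS⟩ := rank_of_finite_quotient f hf n
    refine ⟨Q, i1, i2, r, hr, fun S hgen => ?_⟩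
    have hle := hS S hgen
    obtain ⟨k, hk⟩ := Nat.exists_eq_add_of_le h
    rw [hk, show 60 + k - 1 = 59 + k by omega] at hle
    -- If `60 |S| < 59 n`, then `|S| < n`, and `(59 + k) n ≤ (60 + k) |S|` fails.
    by_contra hlt
    have hSn : S.card ≤ n := by omega
    have := Nat.mul_le_mul_left k hSn
    nlinarith
end

section
/- Let Γ be a group, H ≤ Γ a subgroup, and Γ₀ ≤ Γ a finite-index subgroup. Fix double-coset representatives γ_1, ..., γ_k for H\Γ/Γ₀. Then H is almost malnormal in Γ if and only if the family {γ_i⁻¹Hγ_i ∩ Γ₀}_{i=1..k} is an almost malnormal family in Γ₀. -/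
/-!
Both directions translate intersections of conjugates of `H` by conjugation.

If `g ∈ Γ₀` witnesses an infinite intersection for the indices `i`, `j`, then
`γ j * g * (γ i)⁻¹` witnesses one for `H`, so it lies in `H`; hence `γ i` and `γ j` represent
the same double coset.

Conversely, given `g` with `H ∩ g⁻¹Hg` infinite, write `1 = h' * γ i * c'` and `g = h * γ j * c`.
By `infinite_inf_of_finiteIndex` the intersection with `Γ₀` is still infinite, and conjugating it
by `c'` shows that `c * c'⁻¹ ∈ Γ₀` witnesses an infinite intersection for the indices `i`, `j`.
Thus `i = j` and `γ j * (c * c'⁻¹) * (γ j)⁻¹ = h⁻¹ * g * h'` lies in `H`, so `g ∈ H`.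
-/

theorem infinite_inf_of_finiteIndex {G : Type*} [Group G] (K L : Subgroup G)
    (hL : L.FiniteIndex) (hK : (K : Set G).Infinite) : ((K ⊓ L : Subgroup G) : Set G).Infinite := by
  intro hfin
  apply hK
  have hsub : Finite (L.subgroupOf K) := by
    have : Finite (K ⊓ L : Subgroup G) := hfin
    exact Finite.of_injective
      (fun x : L.subgroupOf K => (⟨x.1.1, x.1.2, x.2⟩ : (K ⊓ L : Subgroup G)))
      (fun x y h => Subtype.ext (Subtype.ext (congrArg (fun z : (K ⊓ L : Subgroup G) => z.1) h)))
  have hcard := (L.subgroupOf K).card_mul_index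
  have hne : Nat.card K ≠ 0 := by
    rw [← hcard]
    exact mul_ne_zero Nat.card_pos.ne' Subgroup.FiniteIndex.index_ne_zero
  exact Nat.finite_of_card_ne_zero hne

/-- Let `H ≤ Γ` and let `Γ₀ ≤ Γ` have finite index.  Fix double coset representatives
`γ 1, ..., γ k` for `H\Γ/Γ₀`.  Then `H` is almost malnormal in `Γ` if and only if the
family `{γᵢ⁻¹Hγᵢ ∩ Γ₀}` is an almost malnormal family of subgroups of `Γ₀`. -/
theorem almostMalnormal_iff_family {Γ : Type*} [Group Γ] (H Γ₀ : Subgroup Γ)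
    (hfi : Γ₀.FiniteIndex) (k : ℕ) (γ : Fin k → Γ)
    (hrep : ∀ g : Γ, ∃ (i : Fin k) (h c : Γ), h ∈ H ∧ c ∈ Γ₀ ∧ g = h * γ i * c)
    (hdisj : ∀ (i j : Fin k) (h c : Γ), h ∈ H → c ∈ Γ₀ → γ i = h * γ j * c → i = j) :
    (∀ g : Γ, {x : Γ | x ∈ H ∧ g * x * g⁻¹ ∈ H}.Infinite → g ∈ H) ↔
    (∀ (i j : Fin k), ∀ g ∈ Γ₀,
      {x : Γ | x ∈ (H.comap (MulAut.conj (γ i)).toMonoidHom ⊓ Γ₀) ∧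
        g * x * g⁻¹ ∈ (H.comap (MulAut.conj (γ j)).toMonoidHom ⊓ Γ₀)}.Infinite →
      i = j ∧ g ∈ H.comap (MulAut.conj (γ j)).toMonoidHom ⊓ Γ₀) := by
  have hmem : ∀ (i : Fin k) (x : Γ), x ∈ (H.comap (MulAut.conj (γ i)).toMonoidHom ⊓ Γ₀) ↔
      γ i * x * (γ i)⁻¹ ∈ H ∧ x ∈ Γ₀ := fun i x => Iff.rfl
  simp only [hmem]
  constructor
  · intro hH i j g hg hinf
    have ht : γ j * g * (γ i)⁻¹ ∈ H := by
      apply hH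
      refine (hinf.image (MulAut.conj (γ i)).injective.injOn).mono ?_
      rintro _ ⟨x, ⟨⟨hx, -⟩, hx', -⟩, rfl⟩
      refine ⟨hx, ?_⟩
      convert hx' using 1
      simp only [MulAut.conj_apply]
      group
    have hij : i = j := by
      refine hdisj i j _ g (H.inv_mem ht) hg ?_
      group
    subst hij
    exact ⟨rfl, ht, hg⟩
  · intro hfam g hinf
    obtain ⟨i, h', c', hh', hc', h1⟩ := hrep 1
    obtain ⟨j, h, c, hh, hc, hgeq⟩ := hrep g
    have hi : γ i = h'⁻¹ * c'⁻¹ := by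
      rw [eq_mul_inv_iff_mul_eq, eq_inv_iff_mul_eq_one, mul_eq_one_comm, ← mul_assoc]; exact h1.symm
    have hinf' := infinite_inf_of_finiteIndex
      (H ⊓ H.comap (MulAut.conj g).toMonoidHom) Γ₀ hfi hinf
    obtain ⟨hij, hm, -⟩ := hfam i j (c * c'⁻¹) (Γ₀.mul_mem hc (Γ₀.inv_mem hc')) (by
      refine (hinf'.image (MulAut.conj c').injective.injOn).mono ?_
      rintro _ ⟨x, ⟨⟨hx, hgx⟩, hx0⟩, rfl⟩
      have hgx' : g * x * g⁻¹ ∈ H := hgx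
      have hx0' : x ∈ Γ₀ := hx0
      simp only [MulAut.conj_apply]
      refine ⟨⟨?_, Γ₀.mul_mem (Γ₀.mul_mem hc' hx0') (Γ₀.inv_mem hc')⟩, ?_, ?_⟩
      · convert H.mul_mem (H.mul_mem (H.inv_mem hh') hx) hh' using 1
        rw [hi]; group
      · convert H.mul_mem (H.mul_mem (H.inv_mem hh) hgx') hh using 1
        rw [hgeq]; group
      · convert Γ₀.mul_mem (Γ₀.mul_mem hc hx0') (Γ₀.inv_mem hc) using 1
        group)
    subst hij
    convert H.mul_mem (H.mul_mem hh hm) (H.inv_mem hh') using 1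
    rw [hgeq, hi]; group
end
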